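/- Let k be a field. The image of the map from k³ \ {0} to the projective space ℙ³(k) sending (a, b, c) to the point with homogeneous coordinates [a² : ab : b² : c] is exactly the set of points [x₀ : x₁ : x₂ : x₃] ∈ ℙ³(k) satisfying x₀x₂ = x₁². (This exhibits the weighted projective space ℙ(1,1,2) as the quadric cone in ℙ³.) -/

import Mathlib

/-!
The map lands in the cone because `a² b² = (ab)²` and the equation is homogeneous. Conversely, let
`x` represent a point of the cone. Although `x₀` need not be a square in `k`, rescaling `x` by
`x₀` or `x₂` makes it one. If `x₀ ≠ 0`, then `x₀ • x = (x₀², x₀x₁, x₁², x₀x₃)` is the image of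
`(x₀, x₁, x₀x₃)`. If `x₀ = 0`, then `x₁ = 0`, and either `x₂ ≠ 0` and `x₂ • x` is the image of
`(0, x₂, x₂x₃)`, or `x = (0, 0, 0, x₃)` is itself the image of `(0, 0, x₃)`.
-/

/-- A point is in the image as soon as some nonzero multiple of its representative has the form
`(a², ab, b², c)`; the two nonvanishing conditions are then automatic. -/
lemma mem_image_of_smul_rep {k : Type*} [Field k] (P : Projectivization k (Fin 4 → k))
    (t a b c : k) (ht : t ≠ 0) (h : t • P.rep = ![a ^ 2, a * b, b ^ 2, c]) :
    ∃ (a b c : k) (_ : (a, b, c) ≠ (0, 0, 0))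
      (h : (![a ^ 2, a * b, b ^ 2, c] : Fin 4 → k) ≠ 0),
      P = Projectivization.mk k ![a ^ 2, a * b, b ^ 2, c] h := by
  have hne : (![a ^ 2, a * b, b ^ 2, c] : Fin 4 → k) ≠ 0 := by
    rw [← h]
    exact smul_ne_zero ht P.rep_nonzero
  refine ⟨a, b, c, ?_, hne, ?_⟩
  · intro h0
    simp only [Prod.mk.injEq] at h0
    obtain ⟨rfl, rfl, rfl⟩ := h0
    exact hne (by ext i; fin_cases i <;> simp)
  · conv_lhs => rw [← P.mk_rep]
    rw [eq_comm, Projectivization.mk_eq_mk_iff']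
    exact ⟨t, h⟩

/-- Let `k` be a field.  The image of the map from `k³ \ {0}` to the
projective space `ℙ³(k)` sending `(a, b, c)` to the point with homogeneous coordinates
`[a² : ab : b² : c]` is exactly the set of points `[x₀ : x₁ : x₂ : x₃] ∈ ℙ³(k)`
satisfying `x₀x₂ = x₁²`.  (Here `ℙ³(k)` is the projectivization of `k⁴`, i.e. nonzero
vectors up to scaling, and the homogeneous quadratic condition is expressed on the chosen
representative `P.rep`, which is equivalent to requiring it for any representative.)
This exhibits the weighted projective space `ℙ(1,1,2)` as the quadric cone in `ℙ³`. -/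
theorem image_of_weighted_P112_is_quadric_cone (k : Type*) [Field k] :
    {P : Projectivization k (Fin 4 → k) |
        ∃ (a b c : k) (_ : (a, b, c) ≠ (0, 0, 0))
          (h : (![a ^ 2, a * b, b ^ 2, c] : Fin 4 → k) ≠ 0),
          P = Projectivization.mk k ![a ^ 2, a * b, b ^ 2, c] h} =
      {P : Projectivization k (Fin 4 → k) | P.rep 0 * P.rep 2 = P.rep 1 ^ 2} := by
  ext P
  simp only [Set.mem_ofPred_eq]
  constructor
  · rintro ⟨a, b, c, -, h, hP⟩
    rw [← P.mk_rep, Projectivization.mk_eq_mk_iff'] at hP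
    obtain ⟨t, ht⟩ := hP
    rw [← ht]
    simp
    ring
  · intro hx
    by_cases h0 : P.rep 0 = 0
    · have h1 : P.rep 1 = 0 := by simpa [h0] using hx.symm
      by_cases h2 : P.rep 2 = 0
      · refine mem_image_of_smul_rep P 1 0 0 (P.rep 3) one_ne_zero ?_
        ext i
        fin_cases i <;> simp [h0, h1, h2]
      · refine mem_image_of_smul_rep P (P.rep 2) 0 (P.rep 2) (P.rep 2 * P.rep 3) h2 ?_
        ext i
        fin_cases i <;> simp [h0, h1, sq]
    · refine mem_image_of_smul_rep P (P.rep 0) (P.rep 0) (P.rep 1) (P.rep 0 * P.rep 3) h0 ?_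
      ext i
      fin_cases i <;> simp [← hx, sq]
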